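/- Let s > 1/2, 0 < t₁ < t₂, M ∈ ℝ, ε ∈ {+1,−1}, and let A : (t₁,t₂) → ℓ^{2,s}(ℤ) be continuously differentiable as a map into the Banach space ℓ^{2,s}(ℤ), such that each component satisfies i A_k'(t) = ε (1/(8πt)) ∑_{(j₁,j₂,j₃)∈ℤ³, k−j₁+j₂−j₃=0} e^{−i(k²−j₁²+j₂²−j₃²)/(4t)} A_{j₁}(t) \overline{A_{j₂}(t)} A_{j₃}(t) − (M/(4πt)) A_k(t). Then the momentum ∑_{k∈ℤ} k |A_k(t)|² converges absolutely for each t and is constant on (t₁,t₂). -/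

import Mathlib

open scoped BigOperators
open Set

/-- Membership in the weighted space `ℓ^{2,s}(ℤ)`. -/
def wMem (s : ℝ) (a : ℤ → ℂ) : Prop :=
  Summable (fun k : ℤ => (1 + |(k : ℝ)|) ^ (2 * s) * ‖a k‖ ^ 2)

/-- The cubic interaction sum `∑_{k-j₁+j₂-j₃=0} e^{-i(k²-j₁²+j₂²-j₃²)/(4t)} A_{j₁} conj(A_{j₂}) A_{j₃}`,
parametrized by the two free indices `(j₁, j₂)`, with `j₃ = k - j₁ + j₂`. -/
noncomputable def cubicSum (A : ℤ → ℂ) (t : ℝ) (k : ℤ) : ℂ :=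
  ∑' j : ℤ × ℤ,
    Complex.exp (-Complex.I *
        ((k ^ 2 - j.1 ^ 2 + j.2 ^ 2 - (k - j.1 + j.2) ^ 2 : ℤ) : ℂ) / (4 * (t : ℂ)))
      * A j.1 * (starRingEnd ℂ) (A j.2) * A (k - j.1 + j.2)

/-- `A : (t₁,t₂) → ℓ^{2,s}` is continuously differentiable as a map into the Banach
space `ℓ^{2,s}(ℤ)`: the weighted sequence `k ↦ (1+|k|)^s A_k(t)` defines a `C¹` curve in `ℓ²`. -/
def C1IntoL2s (s t₁ t₂ : ℝ) (A : ℝ → ℤ → ℂ) : Prop :=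
  ∃ B : ℝ → lp (fun _ : ℤ => ℂ) 2,
    (∀ t ∈ Ioo t₁ t₂, ∀ k : ℤ, B t k = ((1 + |(k : ℝ)|) ^ s : ℝ) * A t k) ∧
    ContDiffOn ℝ 1 B (Ioo t₁ t₂)

/-!
Let `T = ∑ k \overline{A_k} e^{-iθ(k²-j₁²+j₂²-j₃²)} A_{j₁} \overline{A_{j₂}} A_{j₃}`, summed over
`k - j₁ + j₂ - j₃ = 0` with `θ = 1/(4t)`. The equation gives `d/dt ∑ k |A_k|² = 2c Im T`, where `c`
is the real coefficient of the cubic sum. Exchanging the pairs `(k, j₂)` and `(j₁, j₃)` conjugates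
the product, so `T - \overline T` is the same sum with weight `k - j₁` in place of `k`. Exchanging
`k` with `j₂` and `j₁` with `j₃` fixes the product and turns this weight into
`j₂ - j₃ = -(k - j₁)`. Hence `T` is real.

These rearrangements need absolute convergence with only half a derivative on each factor: one
splits `|k| = √|k| √|k|`, distributes the second root by `√|k| ≤ √|j₁| + √|j₂| + √|j₃|`, and uses
that `√|k| A_k` is in `ℓ²` and `A_k` in `ℓ¹`. The sum `∑ k |A_k|²` is differentiated without any
exchange of limits, as a bounded quadratic form on `ℓ^{2,s}`.
-/

open scoped ComplexConjugate RealInnerProductSpace Topology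

section WeightedSequences

variable {s : ℝ} {a : ℤ → ℂ}

lemma rpow_two_mul_one_add_abs (s x : ℝ) :
    (1 + |x|) ^ (2 * s) = ((1 + |x|) ^ s) ^ 2 := by
  rw [mul_comm, Real.rpow_mul (by positivity), Real.rpow_two]

lemma abs_le_one_add_abs_rpow {r : ℝ} (hr : 1 ≤ r) (x : ℝ) : |x| ≤ (1 + |x|) ^ r :=
  (le_add_of_nonneg_left zero_le_one).trans
    (Real.self_le_rpow_of_one_le (le_add_of_nonneg_right (abs_nonneg x)) hr)

lemma summable_one_add_abs_int_rpow {r : ℝ} (hr : 1 < r) :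
    Summable fun k : ℤ ↦ (1 + |(k : ℝ)|) ^ (-r) := by
  refine (Real.summable_abs_int_rpow hr).of_norm_bounded_eventually ?_
  filter_upwards [(finite_singleton (0 : ℤ)).compl_mem_cofinite] with k hk
  rw [Real.norm_of_nonneg (by positivity)]
  have hk : (k : ℝ) ≠ 0 := Int.cast_ne_zero.mpr hk
  exact Real.rpow_le_rpow_of_nonpos (abs_pos.mpr hk) (by linarith) (by linarith)

lemma wMem_of_lp {b : lp (fun _ : ℤ ↦ ℂ) 2}
    (hb : ∀ k : ℤ, b k = ((1 + |(k : ℝ)|) ^ s : ℝ) * a k) : wMem s a := by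
  refine ((lp.memℓp b).summable (by norm_num)).congr fun k ↦ ?_
  rw [hb, norm_mul, Complex.norm_of_nonneg (by positivity), ENNReal.toReal_ofNat, Real.rpow_two,
    mul_pow, rpow_two_mul_one_add_abs]

lemma wMem.summable_abs_mul_norm_sq (hs : 1 / 2 ≤ s) (ha : wMem s a) :
    Summable fun k : ℤ ↦ |(k : ℝ)| * ‖a k‖ ^ 2 := by
  refine ha.of_nonneg_of_le (fun k ↦ by positivity) fun k ↦ ?_
  gcongr
  exact abs_le_one_add_abs_rpow (by linarith) _

lemma wMem.summable_norm (hs : 1 / 2 < s) (ha : wMem s a) : Summable fun k ↦ ‖a k‖ := by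
  have hweight : Summable fun k : ℤ ↦ ((1 + |(k : ℝ)|) ^ (-s)) ^ (2 : ℝ) := by
    refine (summable_one_add_abs_int_rpow (r := 2 * s) (by linarith)).congr fun k ↦ ?_
    rw [← mul_neg, rpow_two_mul_one_add_abs, Real.rpow_two]
  have hseq : Summable fun k : ℤ ↦ ((1 + |(k : ℝ)|) ^ s * ‖a k‖) ^ (2 : ℝ) := by
    refine ha.congr fun k ↦ ?_
    rw [Real.rpow_two, mul_pow, rpow_two_mul_one_add_abs]
  refine (Real.summable_mul_of_Lp_Lq_of_nonneg .two_two (fun k ↦ by positivity)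
    (fun k ↦ by positivity) hweight hseq).congr fun k ↦ ?_
  rw [← mul_assoc, ← Real.rpow_add (by positivity), neg_add_cancel, Real.rpow_zero, one_mul]

end WeightedSequences

section DiagonalQuadraticForm

variable {ι : Type*} {E : ι → Type*} [∀ i, NormedAddCommGroup (E i)]
  [∀ i, InnerProductSpace ℝ (E i)] {B : ℝ → lp E 2} {B' : lp E 2} {d w : ι → ℝ} {K t : ℝ}

lemma hasDerivAt_tsum_mul_norm_sq (hd : ∀ i, |d i| ≤ K) (hB : HasDerivAt B B' t) :
    HasDerivAt (fun τ ↦ ∑' i, d i * ‖B τ i‖ ^ 2) (2 * ∑' i, d i * ⟪B t i, B' i⟫) t := by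
  let D : lp E 2 →L[ℝ] lp E 2 :=
    lp.mapCLM 2 (fun i ↦ d i • ContinuousLinearMap.id ℝ (E i)) (abs_nonneg K) fun i ↦ by
      grw [norm_smul, ContinuousLinearMap.norm_id_le, mul_one, Real.norm_eq_abs, hd i]
      exact le_abs_self K
  have inner_D (f g : lp E 2) : ⟪f, D g⟫ = ∑' i, d i * ⟪f i, g i⟫ :=
    tsum_congr fun i ↦ real_inner_smul_right (f i) (g i) (d i)
  have inner_D_symm : ⟪B', D (B t)⟫ = ⟪B t, D B'⟫ := by
    simp only [inner_D, real_inner_comm]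
  have hderiv : HasDerivAt (fun τ ↦ ⟪B τ, D (B τ)⟫) (2 * ⟪B t, D B'⟫) t := by
    refine (hB.inner ℝ (D.hasFDerivAt.comp_hasDerivAt t hB)).congr_deriv ?_
    rw [Function.comp_apply, inner_D_symm, two_mul]
  simpa only [inner_D, real_inner_self_eq_norm_sq] using hderiv

lemma hasDerivAt_tsum_mul_norm_sq_of_smul {A : ℝ → ∀ i, E i} (hw : ∀ i, w i ≠ 0)
    (hd : ∀ i, |d i| ≤ w i ^ 2 * K) (hBA : ∀ᶠ τ in 𝓝 t, ∀ i, B τ i = w i • A τ i)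
    (hB : HasDerivAt B B' t) :
    HasDerivAt (fun τ ↦ ∑' i, d i * ‖A τ i‖ ^ 2)
      (2 * ∑' i, d i * ⟪A t i, deriv (fun τ ↦ A τ i) t⟫) t := by
  have hA : ∀ᶠ τ in 𝓝 t, ∀ i, A τ i = (w i)⁻¹ • B τ i :=
    hBA.mono fun τ hτ i ↦ by rw [hτ, inv_smul_smul₀ (hw i)]
  have hA' (i : ι) : deriv (fun τ ↦ A τ i) t = (w i)⁻¹ • B' i :=
    (((lp.evalCLM ℝ E 2 i).hasFDerivAt.comp_hasDerivAt t hB).const_smul (w i)⁻¹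
      |>.congr_of_eventuallyEq (hA.mono fun τ hτ ↦ hτ i)).deriv
  have hbound (i : ι) : |d i / w i ^ 2| ≤ K := by
    rw [abs_div, abs_sq, div_le_iff₀' (sq_pos_of_ne_zero (hw i))]
    exact hd i
  refine ((hasDerivAt_tsum_mul_norm_sq hbound hB).congr_of_eventuallyEq ?_).congr_deriv ?_
  · filter_upwards [hA] with τ hτ
    refine tsum_congr fun i ↦ ?_
    rw [hτ, norm_smul, norm_inv, mul_pow, inv_pow, Real.norm_eq_abs, sq_abs]
    ring
  · congr 1
    refine tsum_congr fun i ↦ ?_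
    rw [hA', hA.self_of_nhds, real_inner_smul_left, real_inner_smul_right]
    ring

end DiagonalQuadraticForm

section Rearrangement

/-- The permutation of the quadruples `k - j₁ + j₂ - j₃ = 0`, written as `(k, j₁, j₂)`, which
exchanges the pairs `(k, j₂)` and `(j₁, j₃)`. -/
def exchangePairs : Equiv.Perm (ℤ × ℤ × ℤ) :=
  Function.Involutive.toPerm (fun p ↦ (p.2.1, p.1, p.1 - p.2.1 + p.2.2)) fun p ↦
    Prod.ext rfl (Prod.ext rfl (by dsimp only; ring))

/-- The permutation of the quadruples `k - j₁ + j₂ - j₃ = 0`, written as `(k, j₁, j₂)`, which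
exchanges `k` with `j₂` and `j₁` with `j₃`. -/
def exchangeWithinPairs : Equiv.Perm (ℤ × ℤ × ℤ) :=
  Function.Involutive.toPerm (fun p ↦ (p.2.2, p.1 - p.2.1 + p.2.2, p.1)) fun p ↦
    Prod.ext rfl (Prod.ext (by dsimp only; ring) rfl)

@[simp]
lemma exchangePairs_apply (k j₁ j₂ : ℤ) : exchangePairs (k, j₁, j₂) = (j₁, k, k - j₁ + j₂) :=
  rfl

@[simp]
lemma exchangeWithinPairs_apply (k j₁ j₂ : ℤ) :
    exchangeWithinPairs (k, j₁, j₂) = (j₂, k - j₁ + j₂, k) :=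
  rfl

lemma im_eq_zero_of_hasSum_fst_mul {Q : ℤ × ℤ × ℤ → ℂ}
    (hconj : ∀ p, Q (exchangePairs p) = conj (Q p))
    (hinv : ∀ p, Q (exchangeWithinPairs p) = Q p) {T : ℂ}
    (hT : HasSum (fun p ↦ (p.1 : ℂ) * Q p) T) : T.im = 0 := by
  have hTconj : HasSum (fun p ↦ (p.2.1 : ℂ) * Q p) (conj T) := by
    rw [← exchangePairs.hasSum_iff]
    refine (Complex.hasSum_conj'.mpr hT).congr_fun fun ⟨k, j₁, j₂⟩ ↦ ?_
    rw [Function.comp_apply, hconj, map_mul, map_intCast, exchangePairs_apply]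
  have hdiff : HasSum (fun p ↦ ((p.1 - p.2.1 : ℤ) : ℂ) * Q p) (T - conj T) := by
    simpa only [Int.cast_sub, sub_mul] using hT.sub hTconj
  have hneg : HasSum (fun p ↦ ((p.1 - p.2.1 : ℤ) : ℂ) * Q p) (-(T - conj T)) := by
    rw [← exchangeWithinPairs.hasSum_iff]
    refine hdiff.neg.congr_fun fun ⟨k, j₁, j₂⟩ ↦ ?_
    rw [Function.comp_apply, hinv, exchangeWithinPairs_apply]
    push_cast
    ring
  exact Complex.conj_eq_iff_im.mp
    (sub_eq_zero.mp (self_eq_neg.mp (hdiff.unique hneg))).symm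

end Rearrangement

section QuarticSummability

lemma summable_mul_mul_mul_of_injective {α ι : Type*} {f g : ι → ℝ}
    (hf : Summable fun i ↦ f i ^ 2) (hg : Summable g) (hg₀ : 0 ≤ g) {x y u v : α → ι}
    (hx : Function.Injective fun p ↦ (x p, u p, v p))
    (hy : Function.Injective fun p ↦ (y p, u p, v p)) :
    Summable fun p ↦ f (x p) * f (y p) * (g (u p) * g (v p)) := by
  have hfgg : Summable fun q : ι × ι × ι ↦ f q.1 ^ 2 * (g q.2.1 * g q.2.2) :=
    hf.mul_of_nonneg (hg.mul_of_nonneg hg hg₀ hg₀) (fun _ ↦ sq_nonneg _)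
      fun _ ↦ mul_nonneg (hg₀ _) (hg₀ _)
  refine ((hfgg.comp_injective hx).add (hfgg.comp_injective hy)).of_norm_bounded fun p ↦ ?_
  have hgg : 0 ≤ g (u p) * g (v p) := mul_nonneg (hg₀ _) (hg₀ _)
  have hff : |f (x p) * f (y p)| ≤ f (x p) ^ 2 + f (y p) ^ 2 :=
    abs_le.mpr ⟨by nlinarith [sq_nonneg (f (x p) + f (y p))],
      by nlinarith [sq_nonneg (f (x p) - f (y p))]⟩
  grw [norm_mul, Real.norm_of_nonneg hgg, Real.norm_eq_abs, hff, add_mul]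
  rfl

lemma sqrt_add_le_sqrt_add_sqrt {x y : ℝ} (hx : 0 ≤ x) (hy : 0 ≤ y) : √(x + y) ≤ √x + √y := by
  refine Real.sqrt_le_iff.mpr ⟨by positivity, ?_⟩
  rw [add_sq, Real.sq_sqrt hx, Real.sq_sqrt hy]
  linarith [show 0 ≤ 2 * √x * √y by positivity]

lemma abs_le_sqrt_abs_mul_add (x y z : ℝ) :
    |x| ≤ √|x| * (√|y| + √|z| + √|x - y + z|) := by
  have hx : |x| ≤ |y| + |z| + |x - y + z| := by
    grw [← abs_sub, ← abs_add_le]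
    exact (congrArg abs (by ring)).le
  calc |x| = √|x| * √|x| := (Real.mul_self_sqrt (abs_nonneg x)).symm
    _ ≤ √|x| * √(|y| + |z| + |x - y + z|) := by gcongr
    _ ≤ √|x| * (√|y| + √|z| + √|x - y + z|) := by
      grw [sqrt_add_le_sqrt_add_sqrt, sqrt_add_le_sqrt_add_sqrt]
      all_goals positivity

lemma summable_abs_mul_quartic {a : ℤ → ℝ} (ha₀ : 0 ≤ a) (ha : Summable a)
    (ha₂ : Summable fun k : ℤ ↦ |(k : ℝ)| * a k ^ 2) :
    Summable fun p : ℤ × ℤ × ℤ ↦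
      |(p.1 : ℝ)| * (a p.1 * a p.2.1 * a p.2.2 * a (p.1 - p.2.1 + p.2.2)) := by
  let b (k : ℤ) : ℝ := √|(k : ℝ)| * a k
  have hb : Summable fun k ↦ b k ^ 2 :=
    ha₂.congr fun k ↦ by rw [mul_pow, Real.sq_sqrt (abs_nonneg _)]
  have hbb {x y u v : ℤ × ℤ × ℤ → ℤ} := summable_mul_mul_mul_of_injective hb ha ha₀
    (x := x) (y := y) (u := u) (v := v)
  have h₁ : Summable fun p : ℤ × ℤ × ℤ ↦
      b p.1 * b p.2.1 * (a p.2.2 * a (p.1 - p.2.1 + p.2.2)) := by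
    apply hbb <;> exact fun p q hpq ↦ by simp only [Prod.ext_iff] at hpq ⊢; omega
  have h₂ : Summable fun p : ℤ × ℤ × ℤ ↦
      b p.1 * b p.2.2 * (a p.2.1 * a (p.1 - p.2.1 + p.2.2)) := by
    apply hbb <;> exact fun p q hpq ↦ by simp only [Prod.ext_iff] at hpq ⊢; omega
  have h₃ : Summable fun p : ℤ × ℤ × ℤ ↦
      b p.1 * b (p.1 - p.2.1 + p.2.2) * (a p.2.1 * a p.2.2) := by
    apply hbb <;> exact fun p q hpq ↦ by simp only [Prod.ext_iff] at hpq ⊢; omega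
  have ha_prod (k j₁ j₂ : ℤ) : 0 ≤ a k * a j₁ * a j₂ * a (k - j₁ + j₂) :=
    mul_nonneg (mul_nonneg (mul_nonneg (ha₀ _) (ha₀ _)) (ha₀ _)) (ha₀ _)
  refine ((h₁.add h₂).add h₃).of_nonneg_of_le
    (fun _ ↦ mul_nonneg (abs_nonneg _) (ha_prod _ _ _)) fun ⟨k, j₁, j₂⟩ ↦ ?_
  calc |(k : ℝ)| * (a k * a j₁ * a j₂ * a (k - j₁ + j₂))
      ≤ √|(k : ℝ)| * (√|(j₁ : ℝ)| + √|(j₂ : ℝ)| + √|(k - j₁ + j₂ : ℝ)|) *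
          (a k * a j₁ * a j₂ * a (k - j₁ + j₂)) :=
        mul_le_mul_of_nonneg_right (abs_le_sqrt_abs_mul_add _ _ _) (ha_prod _ _ _)
    _ = b k * b j₁ * (a j₂ * a (k - j₁ + j₂)) + b k * b j₂ * (a j₁ * a (k - j₁ + j₂)) +
          b k * b (k - j₁ + j₂) * (a j₁ * a j₂) := by
        simp only [b]
        push_cast
        ring

end QuarticSummability

section CubicInteraction

variable {θ : ℝ} {a : ℤ → ℂ}

/-- The phase factor `e^{-iθ(k²-j₁²+j₂²-j₃²)}` of the cubic interaction, with
`j₃ = k - j₁ + j₂`. -/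
noncomputable def interactionPhase (θ : ℝ) (k j₁ j₂ : ℤ) : Circle :=
  Circle.exp (-(θ * (k ^ 2 - j₁ ^ 2 + j₂ ^ 2 - (k - j₁ + j₂) ^ 2 : ℤ)))

/-- The cubic interaction sum with an arbitrary phase parameter `θ`; `cubicSum` is the case
`θ = 1 / (4t)`. -/
noncomputable def phasedCubicSum (θ : ℝ) (a : ℤ → ℂ) (k : ℤ) : ℂ :=
  ∑' j : ℤ × ℤ, interactionPhase θ k j.1 j.2 * a j.1 * conj (a j.2) * a (k - j.1 + j.2)

/-- The summand of `∑_k \overline{a_k} N_k`, where `N` is the cubic interaction sum of `a`, indexed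
by `p = (k, j₁, j₂)`. -/
noncomputable def quarticTerm (θ : ℝ) (a : ℤ → ℂ) (p : ℤ × ℤ × ℤ) : ℂ :=
  conj (a p.1) * (interactionPhase θ p.1 p.2.1 p.2.2 * a p.2.1 * conj (a p.2.2) *
    a (p.1 - p.2.1 + p.2.2))

lemma cubicSum_eq_phasedCubicSum (a : ℤ → ℂ) (t : ℝ) :
    cubicSum a t = phasedCubicSum (1 / (4 * t)) a := by
  funext k
  refine tsum_congr fun j ↦ ?_
  rw [interactionPhase, Circle.coe_exp]
  congr 4
  push_cast
  ring

lemma interactionPhase_exchangePairs (θ : ℝ) (k j₁ j₂ : ℤ) :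
    interactionPhase θ j₁ k (k - j₁ + j₂) = (interactionPhase θ k j₁ j₂)⁻¹ := by
  rw [interactionPhase, interactionPhase, ← Circle.exp_neg]
  congr 1
  push_cast
  ring

lemma interactionPhase_exchangeWithinPairs (θ : ℝ) (k j₁ j₂ : ℤ) :
    interactionPhase θ j₂ (k - j₁ + j₂) k = interactionPhase θ k j₁ j₂ := by
  rw [interactionPhase, interactionPhase]
  congr 1
  push_cast
  ring

lemma quarticTerm_exchangePairs (p : ℤ × ℤ × ℤ) :
    quarticTerm θ a (exchangePairs p) = conj (quarticTerm θ a p) := by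
  obtain ⟨k, j₁, j₂⟩ := p
  simp only [exchangePairs_apply, quarticTerm, interactionPhase_exchangePairs, map_mul,
    Complex.conj_conj, Circle.coe_inv_eq_conj, show j₁ - k + (k - j₁ + j₂) = j₂ by ring]
  ring

lemma quarticTerm_exchangeWithinPairs (p : ℤ × ℤ × ℤ) :
    quarticTerm θ a (exchangeWithinPairs p) = quarticTerm θ a p := by
  obtain ⟨k, j₁, j₂⟩ := p
  simp only [exchangeWithinPairs_apply, quarticTerm, interactionPhase_exchangeWithinPairs,
    show j₂ - (k - j₁ + j₂) + k = j₁ by ring]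
  ring

lemma summable_fst_mul_quarticTerm (ha : Summable fun k ↦ ‖a k‖)
    (ha₂ : Summable fun k : ℤ ↦ |(k : ℝ)| * ‖a k‖ ^ 2) :
    Summable fun p : ℤ × ℤ × ℤ ↦ (p.1 : ℂ) * quarticTerm θ a p := by
  refine .of_norm ((summable_abs_mul_quartic (fun k ↦ norm_nonneg (a k)) ha ha₂).congr fun p ↦ ?_)
  simp only [quarticTerm, norm_mul, Circle.norm_coe, RCLike.norm_conj, Complex.norm_intCast]
  ring

lemma hasSum_mul_im_conj_mul_phasedCubicSum (ha : Summable fun k ↦ ‖a k‖)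
    (ha₂ : Summable fun k : ℤ ↦ |(k : ℝ)| * ‖a k‖ ^ 2) :
    HasSum (fun k : ℤ ↦ (k : ℝ) * (conj (a k) * phasedCubicSum θ a k).im) 0 := by
  have hsummable := summable_fst_mul_quarticTerm (θ := θ) ha ha₂
  have hfiber (k : ℤ) : ∑' j : ℤ × ℤ, (k : ℂ) * quarticTerm θ a (k, j) =
      k * (conj (a k) * phasedCubicSum θ a k) := by
    simp only [quarticTerm, phasedCubicSum, tsum_mul_left]
  have htotal := hsummable.hasSum.prod_fiberwise fun k ↦ (hsummable.prod_factor k).hasSum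
  simp only [hfiber] at htotal
  rw [← im_eq_zero_of_hasSum_fst_mul quarticTerm_exchangePairs quarticTerm_exchangeWithinPairs
    hsummable.hasSum]
  exact (Complex.hasSum_im htotal).congr_fun fun k ↦ by
    simp only [← Complex.ofReal_intCast, Complex.im_ofReal_mul]

end CubicInteraction

section Conservation

lemma real_inner_eq_of_I_mul_eq {z z' N : ℂ} {c μ : ℝ} (h : Complex.I * z' = c * N - μ * z) :
    ⟪z, z'⟫ = c * (conj z * N).im := by
  have hmul : Complex.I * (z' * conj z) = c * (conj z * N) - (μ * Complex.normSq z : ℝ) := by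
    rw [← mul_assoc, h, Complex.ofReal_mul, Complex.normSq_eq_conj_mul_self]
    ring
  rw [Complex.inner, ← Complex.I_mul_im, hmul, Complex.sub_im, Complex.im_ofReal_mul,
    Complex.ofReal_im, sub_zero]

/-- `A : U → ℓ^{2,s}(ℤ)` is differentiable, in the encoding of `C1IntoL2s`: the weighted sequence
`k ↦ (1+|k|)^s A_k(t)` defines a differentiable curve in `ℓ²`. -/
def DifferentiableIntoL2s (s : ℝ) (U : Set ℝ) (A : ℝ → ℤ → ℂ) : Prop :=
  ∃ B : ℝ → lp (fun _ : ℤ ↦ ℂ) 2,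
    (∀ t ∈ U, ∀ k : ℤ, B t k = ((1 + |(k : ℝ)|) ^ s : ℝ) * A t k) ∧ DifferentiableOn ℝ B U

variable {s : ℝ} {U : Set ℝ} {A : ℝ → ℤ → ℂ}

lemma C1IntoL2s.differentiableIntoL2s {t₁ t₂ : ℝ} (hA : C1IntoL2s s t₁ t₂ A) :
    DifferentiableIntoL2s s (Ioo t₁ t₂) A :=
  let ⟨B, hBA, hB⟩ := hA
  ⟨B, hBA, hB.differentiableOn one_ne_zero⟩

namespace DifferentiableIntoL2s

lemma wMem (hA : DifferentiableIntoL2s s U A) {t : ℝ} (ht : t ∈ U) : wMem s (A t) :=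
  let ⟨_, hBA, _⟩ := hA
  wMem_of_lp (hBA t ht)

lemma hasDerivAt_momentum (hs : 1 / 2 ≤ s) (hU : IsOpen U) (hA : DifferentiableIntoL2s s U A)
    {t : ℝ} (ht : t ∈ U) :
    HasDerivAt (fun τ ↦ ∑' k : ℤ, (k : ℝ) * ‖A τ k‖ ^ 2)
      (2 * ∑' k : ℤ, (k : ℝ) * ⟪A t k, deriv (fun τ ↦ A τ k) t⟫) t := by
  obtain ⟨B, hBA, hB⟩ := hA
  refine hasDerivAt_tsum_mul_norm_sq_of_smul (w := fun k : ℤ ↦ (1 + |(k : ℝ)|) ^ s) (K := 1)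
    (fun k ↦ by positivity) (fun k ↦ ?_) ?_ (hB.differentiableAt (hU.mem_nhds ht)).hasDerivAt
  · rw [mul_one, ← rpow_two_mul_one_add_abs]
    exact abs_le_one_add_abs_rpow (by linarith) _
  · filter_upwards [hU.mem_nhds ht] with τ hτ k
    rw [hBA τ hτ, Complex.real_smul]

end DifferentiableIntoL2s

theorem momentum_conservation_general (hs : 1 / 2 < s) (hU : IsOpen U) (hU' : IsPreconnected U)
    (hA : DifferentiableIntoL2s s U A) (c μ θ : ℝ → ℝ)
    (hode : ∀ t ∈ U, ∀ k : ℤ, Complex.I * deriv (fun τ ↦ A τ k) t =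
      c t * phasedCubicSum (θ t) (A t) k - μ t * A t k) :
    (∀ t ∈ U, Summable fun k : ℤ ↦ |(k : ℝ) * ‖A t k‖ ^ 2|) ∧
    ∀ t ∈ U, ∀ t' ∈ U,
      ∑' k : ℤ, (k : ℝ) * ‖A t k‖ ^ 2 = ∑' k : ℤ, (k : ℝ) * ‖A t' k‖ ^ 2 := by
  have hsummable (t : ℝ) (ht : t ∈ U) : Summable fun k : ℤ ↦ |(k : ℝ)| * ‖A t k‖ ^ 2 :=
    (hA.wMem ht).summable_abs_mul_norm_sq hs.le
  have hderiv (t : ℝ) (ht : t ∈ U) :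
      HasDerivAt (fun τ ↦ ∑' k : ℤ, (k : ℝ) * ‖A τ k‖ ^ 2) 0 t := by
    have hflux := hasSum_mul_im_conj_mul_phasedCubicSum (θ := θ t)
      ((hA.wMem ht).summable_norm hs) (hsummable t ht)
    refine (hA.hasDerivAt_momentum hs.le hU ht).congr_deriv ?_
    simp only [real_inner_eq_of_I_mul_eq (hode t ht _), mul_left_comm _ (c t), tsum_mul_left,
      hflux.tsum_eq, mul_zero]
  refine ⟨fun t ht ↦ (hsummable t ht).congr fun k ↦ ?_, fun t ht t' ht' ↦ ?_⟩
  · rw [abs_mul, abs_sq]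
  · exact hU.is_const_of_deriv_eq_zero hU'
      (fun τ hτ ↦ (hderiv τ hτ).differentiableAt.differentiableWithinAt)
      (fun τ hτ ↦ (hderiv τ hτ).deriv) ht ht'

end Conservation

/-- Conservation of momentum: for a `C¹`-in-`ℓ^{2,s}` solution of the coefficient system,
the momentum `∑_k k |A_k(t)|²` converges absolutely and is constant on `(t₁,t₂)`. -/
theorem momentum_conservation (s t₁ t₂ M ε : ℝ) (hs : 1 / 2 < s)
    (ht₁ : 0 < t₁) (ht : t₁ < t₂) (hε : ε = 1 ∨ ε = -1)
    (A : ℝ → ℤ → ℂ)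
    (hmem : ∀ t ∈ Ioo t₁ t₂, wMem s (A t))
    (hC1 : C1IntoL2s s t₁ t₂ A)
    (hode : ∀ t ∈ Ioo t₁ t₂, ∀ k : ℤ,
      Complex.I * deriv (fun τ : ℝ => A τ k) t =
        (ε : ℂ) * (1 / (8 * (Real.pi : ℂ) * t)) * cubicSum (A t) t k
          - ((M : ℂ) / (4 * (Real.pi : ℂ) * t)) * A t k) :
    (∀ t ∈ Ioo t₁ t₂, Summable (fun k : ℤ => |(k : ℝ) * ‖A t k‖ ^ 2|)) ∧
    ∀ t ∈ Ioo t₁ t₂, ∀ t' ∈ Ioo t₁ t₂,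
      ∑' k : ℤ, (k : ℝ) * ‖A t k‖ ^ 2 = ∑' k : ℤ, (k : ℝ) * ‖A t' k‖ ^ 2 := by
  refine momentum_conservation_general hs isOpen_Ioo isPreconnected_Ioo hC1.differentiableIntoL2s
    (fun t ↦ ε * (1 / (8 * Real.pi * t))) (fun t ↦ M / (4 * Real.pi * t)) (fun t ↦ 1 / (4 * t)) ?_
  simpa [cubicSum_eq_phasedCubicSum] using hode
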